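/- Let d ≥ 2 and let Q_i (i ∈ ℕ) be the real polynomials defined by Q_0(t) = 1, Q_1(t) = t, Q_2(t) = (d·t² − 1)/(d − 1), and (i + d − 2)·Q_{i+1}(t) = (2i + d − 2)·t·Q_i(t) − i·Q_{i−1}(t) for i ≥ 2. Suppose f = f_0·Q_0 + f_1·Q_1 + … + f_k·Q_k for some k ≥ 1 with f_0 > 0 and f_1, …, f_k ≥ 0, and suppose there is s ∈ (−1, 1) such that f(t) ≤ 0 for all t ∈ [−1, s]. Then every finite set X of unit vectors in ℝ^d with ⟨x, y⟩ ≤ s for all distinct x, y ∈ X satisfies |X| ≤ f(1)/f_0. -/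

import Mathlib

open scoped RealInnerProductSpace

namespace LPB

open MvPolynomial

variable {d : ℕ}

/-- Multi-index factorial. -/
noncomputable def mfac (a : Fin d →₀ ℕ) : ℝ := ∏ i, ((a i).factorial : ℝ)

lemma mfac_pos (a : Fin d →₀ ℕ) : 0 < mfac a :=
  Finset.prod_pos fun i _ => by exact_mod_cast Nat.factorial_pos _

lemma mfac_add (a : Fin d →₀ ℕ) (i : Fin d) :
    mfac (a + Finsupp.single i 1) = ((a i : ℝ) + 1) * mfac a := by
  unfold mfac
  rw [← Finset.mul_prod_erase _ _ (Finset.mem_univ i), ← Finset.mul_prod_erase _ (fun j => ((a j).factorial : ℝ)) (Finset.mem_univ i), ← mul_assoc]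
  congr 1
  · simp [Nat.factorial_succ]
  · refine Finset.prod_congr rfl fun j hj => ?_
    have : i ≠ j := (Finset.ne_of_mem_erase hj).symm
    simp [this]

/-- The Fischer inner product, linear in the first argument. -/
noncomputable def B (q : MvPolynomial (Fin d) ℝ) : MvPolynomial (Fin d) ℝ →ₗ[ℝ] ℝ :=
  (basisMonomials (Fin d) ℝ).constr ℝ (fun a => q.coeff a * mfac a)

lemma B_monomial (q : MvPolynomial (Fin d) ℝ) (a : Fin d →₀ ℕ) (r : ℝ) :
    B q (monomial a r) = r * (q.coeff a * mfac a) := by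
  have h : (monomial a r : MvPolynomial (Fin d) ℝ) = r • basisMonomials (Fin d) ℝ a := by
    simp [smul_monomial]
  rw [h, map_smul, B, Module.Basis.constr_basis, smul_eq_mul]

lemma B_self_nonneg (p : MvPolynomial (Fin d) ℝ) : 0 ≤ B p p := by
  have h : B p p = ∑ a ∈ p.support, p.coeff a * (p.coeff a * mfac a) := by
    conv_lhs => rw [p.as_sum, map_sum, ← p.as_sum]
    exact Finset.sum_congr rfl fun a _ => B_monomial _ _ _
  rw [h]
  refine Finset.sum_nonneg fun a _ => ?_
  rw [← mul_assoc]
  exact mul_nonneg (mul_self_nonneg _) (mfac_pos a).le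

lemma B_X_mul (q p : MvPolynomial (Fin d) ℝ) (i : Fin d) :
    B q (X i * p) = B (pderiv i q) p := by
  induction p using MvPolynomial.induction_on' with
  | monomial a r =>
    rw [X, monomial_mul, one_mul, B_monomial, B_monomial, coeff_pderiv, add_comm, mfac_add]
    ring
  | add p q hp hq => rw [mul_add, map_add, map_add, hp, hq]

/-- The linear form attached to `x`. -/
noncomputable def L (x : Fin d → ℝ) : MvPolynomial (Fin d) ℝ := ∑ i, C (x i) * X i

/-- The squared norm. -/
noncomputable def R (d : ℕ) : MvPolynomial (Fin d) ℝ := ∑ i, X i * X i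

/-- Laplacian. -/
noncomputable def lap (p : MvPolynomial (Fin d) ℝ) : MvPolynomial (Fin d) ℝ :=
  ∑ i, pderiv i (pderiv i p)

/-- Directional derivative. -/
noncomputable def D (x : Fin d → ℝ) (p : MvPolynomial (Fin d) ℝ) : MvPolynomial (Fin d) ℝ :=
  ∑ i, C (x i) * pderiv i p

lemma B_R_mul (q p : MvPolynomial (Fin d) ℝ) (hq : lap q = 0) : B q (R d * p) = 0 := by
  have hB : ∀ i, B q (X i * X i * p) = B (pderiv i (pderiv i q)) p := fun i => by
    rw [mul_assoc, B_X_mul, B_X_mul]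
  have hadd : ∀ q₁ q₂ : MvPolynomial (Fin d) ℝ, B (q₁ + q₂) p = B q₁ p + B q₂ p := by
    intro q₁ q₂
    induction p using MvPolynomial.induction_on' with
    | monomial a r => simp only [B_monomial, coeff_add]; ring
    | add p q hp hq =>
      rw [map_add, map_add, map_add, hp (fun i => by rw [mul_assoc, B_X_mul, B_X_mul]),
        hq (fun i => by rw [mul_assoc, B_X_mul, B_X_mul])]; ring
  have h0 : B (0 : MvPolynomial (Fin d) ℝ) p = 0 := by
    have := hadd 0 0
    rw [add_zero] at this
    linarith
  let φ : MvPolynomial (Fin d) ℝ →+ ℝ := ⟨⟨fun q => B q p, h0⟩, hadd⟩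
  have hφ : ∑ i, φ (pderiv i (pderiv i q)) = φ (lap q) := (map_sum φ _ _).symm
  rw [R, Finset.sum_mul, map_sum, Finset.sum_congr rfl fun i _ => hB i]
  rw [hq, map_zero] at hφ
  exact hφ

lemma B_one (q : MvPolynomial (Fin d) ℝ) : B q 1 = q.coeff 0 := by
  rw [one_def, B_monomial]; simp [mfac]

lemma B_L_pow (y : Fin d → ℝ) (n : ℕ) : ∀ q : MvPolynomial (Fin d) ℝ, q.IsHomogeneous n →
    B q (L y ^ n) = n.factorial * eval y q := by
  induction n with
  | zero =>
    intro q hq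
    have hq' : q = C (q.coeff 0) := by
      rw [← totalDegree_eq_zero_iff_eq_C]
      exact Nat.le_zero.mp hq.totalDegree_le
    rw [pow_zero, B_one, hq']; simp
  | succ n ih =>
    intro q hq
    have h1 : ∀ i, B q (C (y i) * X i * L y ^ n) = n.factorial * (y i * eval y (pderiv i q)) := by
      intro i
      rw [mul_assoc, ← smul_eq_C_mul, map_smul, B_X_mul, ih _ (by simpa using hq.pderiv (i := i)), smul_eq_mul]
      ring
    have h2 := congrArg (eval y) hq.sum_X_mul_pderiv
    simp only [map_sum, map_mul, eval_X, nsmul_eq_mul, map_natCast] at h2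
    rw [pow_succ', L, Finset.sum_mul, map_sum]
    rw [← L, Finset.sum_congr rfl fun i _ => h1 i, ← Finset.mul_sum, h2, Nat.factorial_succ]
    push_cast; ring

/-- Zonal harmonics. -/
noncomputable def H (x : Fin d → ℝ) : ℕ → MvPolynomial (Fin d) ℝ
  | 0 => 1
  | 1 => L x
  | (n+2) => C ((2 * n + d : ℝ) / (n + d - 1)) * (L x * H x (n+1))
      - C ((n + 1 : ℝ) / (n + d - 1)) * (R d * H x n)

lemma L_hom (x : Fin d → ℝ) : (L x).IsHomogeneous 1 :=
  IsHomogeneous.sum _ _ _ fun i _ => by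
    simpa using (isHomogeneous_C (Fin d) (x i)).mul (isHomogeneous_X ℝ i)

lemma R_hom : (R d).IsHomogeneous 2 :=
  IsHomogeneous.sum _ _ _ fun i _ => (isHomogeneous_X ℝ i).mul (isHomogeneous_X ℝ i)

lemma H_hom (x : Fin d → ℝ) (n : ℕ) : (H x n).IsHomogeneous n := by
  induction n using Nat.twoStepInduction with
  | zero => exact isHomogeneous_one _ _
  | one => exact L_hom x
  | more n h0 h1 =>
    rw [H]
    refine IsHomogeneous.sub ?_ ?_
    · have := (isHomogeneous_C (Fin d) ((2 * n + d : ℝ) / (n + d - 1))).mul ((L_hom x).mul h1)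
      rwa [show 0 + (1 + (n + 1)) = n + 2 by omega] at this
    · have := (isHomogeneous_C (Fin d) ((n + 1 : ℝ) / (n + d - 1))).mul ((R_hom).mul h0)
      rwa [show 0 + (2 + n) = n + 2 by omega] at this

lemma pderiv_L (x : Fin d → ℝ) (i : Fin d) : pderiv i (L x) = C (x i) := by
  simp [L, pderiv_X, Pi.single_apply, Finset.sum_ite_eq]

lemma pderiv_R (i : Fin d) : pderiv i (R d) = 2 * X i := by
  simp [R, pderiv_X, Pi.single_apply, Finset.sum_add_distrib]
  ring

lemma D_mul (x : Fin d → ℝ) (p q : MvPolynomial (Fin d) ℝ) :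
    D x (p * q) = D x p * q + p * D x q := by
  simp only [D, Finset.sum_mul, Finset.mul_sum, ← Finset.sum_add_distrib, pderiv_mul]
  exact Finset.sum_congr rfl fun i _ => by ring

lemma D_C (x : Fin d → ℝ) (r : ℝ) : D x (C r) = 0 := by simp [D]

lemma D_sub (x : Fin d → ℝ) (p q : MvPolynomial (Fin d) ℝ) :
    D x (p - q) = D x p - D x q := by
  simp [D, mul_sub]

lemma D_L (x : Fin d → ℝ) (hx : ∑ i, x i * x i = 1) : D x (L x) = 1 := by
  simp only [D, pderiv_L, ← C_mul, ← map_sum, hx, C_1]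

lemma D_R (x : Fin d → ℝ) : D x (R d) = 2 * L x := by
  simp only [D, pderiv_R, L, Finset.mul_sum]
  exact Finset.sum_congr rfl fun i _ => by ring

lemma H_rec (hd : 2 ≤ d) (x : Fin d → ℝ) (n : ℕ) :
    C (n + d - 1 : ℝ) * H x (n+2) = C (2 * n + d : ℝ) * (L x * H x (n+1))
      - C (n + 1 : ℝ) * (R d * H x n) := by
  have hd' : (2:ℝ) ≤ d := by exact_mod_cast hd
  have hn : (n + d - 1 : ℝ) ≠ 0 := by
    have : (0:ℝ) ≤ n := n.cast_nonneg
    intro h; linarith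
  rw [H, mul_sub, ← mul_assoc, ← mul_assoc (C _) (C _) (R d * _), ← C_mul, ← C_mul,
    mul_div_cancel₀ _ hn, mul_div_cancel₀ _ hn]

lemma C_cancel {r : ℝ} (hr : r ≠ 0) {p q : MvPolynomial (Fin d) ℝ} (h : C r * p = C r * q) :
    p = q := mul_left_cancel₀ (by simpa using hr) h

lemma D_H (hd : 2 ≤ d) (x : Fin d → ℝ) (hx : ∑ i, x i * x i = 1) (n : ℕ) :
    D x (H x (n+1)) = C (n + 1 : ℝ) * H x n := by
  have hd' : (2:ℝ) ≤ d := by exact_mod_cast hd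
  induction n using Nat.twoStepInduction with
  | zero => simp [H, D_L x hx]
  | one =>
    have hn : ((0:ℕ) + d - 1 : ℝ) ≠ 0 := by
      intro h; push_cast at h; linarith
    apply C_cancel hn
    have e0 : H x 0 = C 1 := by rw [C_1]; rfl
    have e1 : H x (0 + 1) = L x := rfl
    have h := congrArg (D x) (H_rec hd x 0)
    rw [e0, e1] at h
    simp only [D_mul, D_sub, D_C, D_R, D_L x hx] at h
    rw [e1]
    simp only [map_add, map_sub, map_mul, map_one, map_natCast, map_ofNat] at h ⊢
    push_cast at h ⊢
    simp only [zero_add, Nat.reduceAdd] at h ⊢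
    linear_combination h
  | more n h0 h1 =>
    have hn : ((n+1:ℕ) + d - 1 : ℝ) ≠ 0 := by
      have : (0:ℝ) ≤ n := n.cast_nonneg
      intro h; push_cast at h; linarith
    apply C_cancel hn
    have h := congrArg (D x) (H_rec hd x (n+1))
    have h2 := H_rec hd x n
    simp only [D_mul, D_sub, D_C, D_R, D_L x hx, h0, h1] at h
    simp only [map_add, map_sub, map_mul, map_one, map_natCast, map_ofNat] at h h2 ⊢
    push_cast at h h2 ⊢
    linear_combination h - ((n : MvPolynomial (Fin d) ℝ) + 2) * h2

lemma lap_L_mul (x : Fin d → ℝ) (p : MvPolynomial (Fin d) ℝ) :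
    lap (L x * p) = 2 * D x p + L x * lap p := by
  simp only [lap, D, pderiv_mul, pderiv_L, map_add, pderiv_C, Finset.mul_sum,
    ← Finset.sum_add_distrib]
  exact Finset.sum_congr rfl fun i _ => by ring

lemma lap_R_mul (p : MvPolynomial (Fin d) ℝ) (n : ℕ) (hp : p.IsHomogeneous n) :
    lap (R d * p) = C (2 * d + 4 * n : ℝ) * p + R d * lap p := by
  have h := hp.sum_X_mul_pderiv
  have h2 : ∀ i : Fin d, pderiv i (2 : MvPolynomial (Fin d) ℝ) = 0 := fun i => by
    rw [show (2 : MvPolynomial (Fin d) ℝ) = C 2 from (map_ofNat C 2).symm, pderiv_C]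
  have h3 : ∀ i : Fin d, pderiv i (pderiv i (R d * p))
      = 2 * p + 4 * (X i * pderiv i p) + R d * pderiv i (pderiv i p) := by
    intro i
    simp only [pderiv_mul, pderiv_R, map_add, h2, pderiv_X_self]
    ring
  rw [lap, Finset.sum_congr rfl fun i _ => h3 i, Finset.sum_add_distrib, Finset.sum_add_distrib,
    ← Finset.mul_sum, ← Finset.mul_sum, ← Finset.mul_sum, h, lap]
  simp only [map_add, map_mul, map_natCast, map_ofNat, Finset.sum_const, Finset.card_univ,
    Fintype.card_fin, nsmul_eq_mul]
  ring

lemma lap_sub (p q : MvPolynomial (Fin d) ℝ) : lap (p - q) = lap p - lap q := by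
  simp [lap]

lemma lap_C_mul (r : ℝ) (p : MvPolynomial (Fin d) ℝ) : lap (C r * p) = C r * lap p := by
  simp [lap, Finset.mul_sum, pderiv_C_mul]

lemma lap_H (hd : 2 ≤ d) (x : Fin d → ℝ) (hx : ∑ i, x i * x i = 1) (n : ℕ) :
    lap (H x n) = 0 := by
  have hd' : (2:ℝ) ≤ d := by exact_mod_cast hd
  induction n using Nat.twoStepInduction with
  | zero => simp [H, lap]
  | one => simp [H, lap, pderiv_L]
  | more n h0 h1 =>
    have hn : (n + d - 1 : ℝ) ≠ 0 := by
      have : (0:ℝ) ≤ n := n.cast_nonneg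
      intro h; linarith
    apply C_cancel hn
    rw [← lap_C_mul, H_rec hd, lap_sub, lap_C_mul, lap_C_mul, lap_L_mul, lap_R_mul _ n (H_hom x n),
      h0, h1, D_H hd x hx]
    simp only [map_add, map_sub, map_mul, map_one, map_natCast, map_ofNat]
    ring

/-- Leading coefficient. -/
noncomputable def lead (d : ℕ) : ℕ → ℝ
  | 0 => 1
  | 1 => 1
  | (n+2) => (2 * n + d : ℝ) / (n + d - 1) * lead d (n+1)

lemma lead_pos (hd : 2 ≤ d) (n : ℕ) : 0 < lead d n := by
  have hd' : (2:ℝ) ≤ d := by exact_mod_cast hd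
  induction n using Nat.twoStepInduction with
  | zero => exact one_pos
  | one => exact one_pos
  | more n _ h1 =>
    have h0 : (0:ℝ) ≤ n := n.cast_nonneg
    exact mul_pos (div_pos (by linarith) (by linarith)) h1

lemma H_lead (x : Fin d → ℝ) (n : ℕ) :
    ∃ p, H x n = C (lead d n) * L x ^ n + R d * p := by
  induction n using Nat.twoStepInduction with
  | zero => exact ⟨0, by simp [H, lead]⟩
  | one => exact ⟨0, by simp [H, lead]⟩
  | more n h0 h1 =>
    obtain ⟨p, hp⟩ := h1
    refine ⟨C ((2 * n + d : ℝ) / (n + d - 1)) * L x * p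
      - C ((n + 1 : ℝ) / (n + d - 1)) * H x n, ?_⟩
    rw [H, hp, lead, C_mul]
    ring

lemma lap_sum {ι : Type*} (X : Finset ι) (p : ι → MvPolynomial (Fin d) ℝ) :
    lap (∑ x ∈ X, p x) = ∑ x ∈ X, lap (p x) := by
  simp only [lap, map_sum]
  exact Finset.sum_comm

lemma psd (hd : 2 ≤ d) (n : ℕ) {ι : Type*} (X : Finset ι) (v : ι → Fin d → ℝ)
    (hv : ∀ x ∈ X, ∑ i, v x i * v x i = 1) :
    0 ≤ ∑ y ∈ X, ∑ x ∈ X, eval (v y) (H (v x) n) := by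
  set S := ∑ x ∈ X, H (v x) n with hS
  have hom : S.IsHomogeneous n := IsHomogeneous.sum _ _ _ fun x _ => H_hom _ _
  have harm : lap S = 0 := by
    rw [hS, lap_sum]
    exact Finset.sum_eq_zero fun x hx => lap_H hd _ (hv x hx) n
  have key : ∀ y, B S (H (v y) n) = lead d n * n.factorial * eval (v y) S := by
    intro y
    obtain ⟨p, hp⟩ := H_lead (v y) n
    rw [hp, map_add, B_R_mul _ _ harm, ← smul_eq_C_mul, map_smul, B_L_pow _ _ _ hom, smul_eq_mul]
    ring
  have h := B_self_nonneg S
  have h2 : B S S = lead d n * n.factorial * ∑ y ∈ X, ∑ x ∈ X, eval (v y) (H (v x) n) := by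
    conv_lhs => rw [hS, map_sum, ← hS]
    rw [Finset.sum_congr rfl fun y _ => key y, ← Finset.mul_sum]
    simp only [hS, map_sum]
  rw [h2] at h
  have : 0 < lead d n * n.factorial :=
    mul_pos (lead_pos hd n) (by exact_mod_cast n.factorial_pos)
  exact nonneg_of_mul_nonneg_right h this

lemma eval_H (hd : 2 ≤ d) (Q : ℕ → ℝ → ℝ)
    (hQ0 : ∀ t, Q 0 t = 1)
    (hQ1 : ∀ t, Q 1 t = t)
    (hQ2 : ∀ t, Q 2 t = ((d : ℝ) * t ^ 2 - 1) / ((d : ℝ) - 1))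
    (hQrec : ∀ i : ℕ, 2 ≤ i → ∀ t,
      ((i : ℝ) + (d : ℝ) - 2) * Q (i + 1) t
        = (2 * (i : ℝ) + (d : ℝ) - 2) * t * Q i t - (i : ℝ) * Q (i - 1) t)
    (x y : Fin d → ℝ) (hy : ∑ i, y i * y i = 1) (n : ℕ) :
    eval y (H x n) = Q n (∑ i, x i * y i) := by
  have hd' : (2:ℝ) ≤ d := by exact_mod_cast hd
  have eL : eval y (L x) = ∑ i, x i * y i := by simp [L]
  have eR : eval y (R d) = 1 := by simp [R, hy]
  induction n using Nat.twoStepInduction with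
  | zero => simp [H, hQ0]
  | one => rw [H, eL, hQ1]
  | more n h0 h1 =>
    have hn : (n + d - 1 : ℝ) ≠ 0 := by
      have : (0:ℝ) ≤ n := n.cast_nonneg
      intro h; linarith
    have h := congrArg (eval y) (H_rec hd x n)
    simp only [map_mul, map_sub, eval_C, eL, eR, h0, h1] at h
    apply mul_left_cancel₀ hn
    rw [h]
    rcases n with _ | n
    · have : (d - 1 : ℝ) ≠ 0 := by intro h; linarith
      rw [hQ2, hQ1, hQ0]
      push_cast
      rw [zero_add (d : ℝ), mul_div_cancel₀ _ this]
      ring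
    · have h3 := hQrec (n+2) (by omega) (∑ i, x i * y i)
      rw [show n + 2 - 1 = n + 1 by omega] at h3
      rw [show n + 1 + 2 = n + 2 + 1 by omega, show n + 1 + 1 = n + 2 by omega]
      push_cast at h3 ⊢
      linear_combination -h3

end LPB

/-- The classical linear programming bound for spherical codes: if
`f = f_0 Q_0 + … + f_k Q_k` is a nonnegative combination of the Gegenbauer polynomials
for dimension `d` with `f_0 > 0`, and `f ≤ 0` on `[-1, s]` for some `s ∈ (-1,1)`, then
every finite set `X` of unit vectors in `ℝ^d` with pairwise inner products at most `s`
satisfies `|X| ≤ f(1)/f_0`. -/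
theorem linear_programming_bound (d : ℕ) (hd : 2 ≤ d)
    (Q : ℕ → ℝ → ℝ)
    (hQ0 : ∀ t, Q 0 t = 1)
    (hQ1 : ∀ t, Q 1 t = t)
    (hQ2 : ∀ t, Q 2 t = ((d : ℝ) * t ^ 2 - 1) / ((d : ℝ) - 1))
    (hQrec : ∀ i : ℕ, 2 ≤ i → ∀ t,
      ((i : ℝ) + (d : ℝ) - 2) * Q (i + 1) t
        = (2 * (i : ℝ) + (d : ℝ) - 2) * t * Q i t - (i : ℝ) * Q (i - 1) t)
    (k : ℕ) (hk : 1 ≤ k)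
    (c : ℕ → ℝ) (hc0 : 0 < c 0) (hc : ∀ i, 1 ≤ i → i ≤ k → 0 ≤ c i)
    (f : ℝ → ℝ) (hf : ∀ t, f t = ∑ i ∈ Finset.range (k + 1), c i * Q i t)
    (s : ℝ) (hs : s ∈ Set.Ioo (-1 : ℝ) 1)
    (hfs : ∀ t ∈ Set.Icc (-1 : ℝ) s, f t ≤ 0)
    (X : Finset (EuclideanSpace ℝ (Fin d)))
    (hX : ∀ x ∈ X, ‖x‖ = 1)
    (hXs : ∀ x ∈ X, ∀ y ∈ X, x ≠ y → ⟪x, y⟫ ≤ s) :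
    (X.card : ℝ) ≤ f 1 / c 0 := by
  have hsq : ∀ x : EuclideanSpace ℝ (Fin d), ‖x‖ = 1 → ∑ i, x i * x i = 1 := by
    intro x hx
    have h := EuclideanSpace.real_norm_sq_eq x
    rw [hx, one_pow] at h
    rw [h]
    exact Finset.sum_congr rfl fun i _ => by ring
  have hin : ∀ x y : EuclideanSpace ℝ (Fin d), ⟪x, y⟫ = ∑ i, x i * y i := by
    intro x y
    rw [PiLp.inner_apply]
    exact Finset.sum_congr rfl fun i _ => by simp [mul_comm]
  have main : ∀ Y : Finset (EuclideanSpace ℝ (Fin d)), (∀ x ∈ Y, ‖x‖ = 1) →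
      c 0 * ((Y.card : ℝ) * Y.card) ≤ ∑ y ∈ Y, ∑ x ∈ Y, f ⟪x, y⟫ := by
    intro Y hY
    have h1 : ∀ n, 0 ≤ ∑ y ∈ Y, ∑ x ∈ Y, Q n ⟪x, y⟫ := by
      intro n
      have h := LPB.psd hd n Y (fun x i => x i) (fun x hx => hsq x (hY x hx))
      refine h.trans_eq ?_
      refine Finset.sum_congr rfl fun y hy => Finset.sum_congr rfl fun x _ => ?_
      rw [LPB.eval_H hd Q hQ0 hQ1 hQ2 hQrec _ _ (hsq y (hY y hy)), hin]
    have h2 : ∑ y ∈ Y, ∑ x ∈ Y, f ⟪x, y⟫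
        = ∑ n ∈ Finset.range (k+1), c n * ∑ y ∈ Y, ∑ x ∈ Y, Q n ⟪x, y⟫ := by
      simp only [hf, Finset.mul_sum]
      rw [Finset.sum_comm (s := Finset.range (k+1))]
      refine Finset.sum_congr rfl fun y _ => ?_
      rw [Finset.sum_comm]
    rw [h2, Finset.sum_range_succ']
    have h3 : 0 ≤ ∑ n ∈ Finset.range k, c (n+1) * ∑ y ∈ Y, ∑ x ∈ Y, Q (n+1) ⟪x, y⟫ :=
      Finset.sum_nonneg fun n hn => mul_nonneg
        (hc _ (by omega) (by have := Finset.mem_range.mp hn; omega)) (h1 _)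
    have h4 : ∑ y ∈ Y, ∑ x ∈ Y, Q 0 ⟪x, y⟫ = (Y.card : ℝ) * Y.card := by
      simp [hQ0]
    rw [h4]
    linarith
  rw [le_div_iff₀ hc0]
  have hf1 : c 0 ≤ f 1 := by
    have hu : ‖EuclideanSpace.single (⟨0, by omega⟩ : Fin d) (1:ℝ)‖ = 1 := by simp
    have h := main {EuclideanSpace.single (⟨0, by omega⟩ : Fin d) (1:ℝ)} (by simp)
    rw [Finset.sum_singleton, Finset.sum_singleton, real_inner_self_eq_norm_sq, hu] at h
    simpa using h
  have hup : ∑ y ∈ X, ∑ x ∈ X, f ⟪x, y⟫ ≤ X.card * f 1 := by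
    rw [← nsmul_eq_mul]
    refine Finset.sum_le_card_nsmul _ _ _ fun y hy => ?_
    rw [← Finset.add_sum_erase _ _ hy, real_inner_self_eq_norm_sq, hX y hy, one_pow]
    have : ∑ x ∈ X.erase y, f ⟪x, y⟫ ≤ 0 := by
      refine Finset.sum_nonpos fun x hx => ?_
      have hxX := Finset.mem_of_mem_erase hx
      refine hfs _ ⟨?_, hXs x hxX y hy (Finset.ne_of_mem_erase hx)⟩
      have h := abs_real_inner_le_norm x y
      rw [hX x hxX, hX y hy, one_mul] at h
      exact (abs_le.mp h).1
    linarith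
  have hlow := main X hX
  rcases Nat.eq_zero_or_pos X.card with h0 | h0
  · rw [h0]; push_cast; linarith
  · have h0' : (0:ℝ) < X.card := by exact_mod_cast h0
    refine le_of_mul_le_mul_left ?_ h0'
    linarith
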